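/- Let m ≥ 3 be odd and λ = (m−2)/2. Define A_{1/2}(w,z) = (π/(2z))^{1/2} (1/2) Σ_{k≥0} (−i + (−1)^k) J_{k+1/2}(z) C_k^{1/2}(w) and B_{1/2}(w,z) = (π/(2z))^{1/2} Σ_{k≥0} (k+1/2)(i + (−1)^k) J_{k+1/2}(z) C_k^{1/2}(w). Then the functions A_λ, B_λ, C_λ of the series representation of the Clifford–Fourier kernel are obtained from these by differentiation: A_{(m−2)/2}(w,z) = (−1)^{(m−3)/2} (m−2) z^{(3−m)/2} ∂_w^{(m−3)/2} A_{1/2}(w,z); B_{(m−2)/2}(w,z) = (−1)^{(m−3)/2} z^{(3−m)/2} ∂_w^{(m−3)/2} B_{1/2}(w,z); C_{(m−2)/2}(w,z) = 2 (−1)^{(m−1)/2} z^{(1−m)/2} ∂_w^{(m−1)/2} A_{1/2}(w,z). Hence K_−(x,y) = A_{(m−2)/2}(w,z) + B_{(m−2)/2}(w,z) + (x∧y) C_{(m−2)/2}(w,z) is determined by A_{1/2} and B_{1/2}. -/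

import Mathlib

open scoped BigOperators
open MeasureTheory

noncomputable section

namespace CliffordFourier

/-- The Gegenbauer polynomial `C_k^λ(w)`, defined through the standard three-term
recurrence, equivalent to the generating function `(1-2wt+t²)^{-λ} = Σ_k C_k^λ(w) t^k`. -/
def geg (lam : ℝ) : ℕ → ℝ → ℝ
  | 0, _ => 1
  | 1, w => 2 * lam * w
  | (k+2), w => (2 * ((k : ℝ) + 1 + lam) * w * geg lam (k+1) w
      - ((k : ℝ) + 2 * lam) * geg lam k w) / ((k : ℝ) + 2)

/-- The Bessel function of the first kind
`J_a(z) = Σ_{j≥0} (-1)^j (z/2)^{2j+a} / (j! Γ(j+a+1))`. -/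
def besselJ (a z : ℝ) : ℝ :=
  ∑' j : ℕ, ((-1 : ℝ)^j * (z/2) ^ (2*(j:ℝ) + a)) / (j.factorial * Real.Gamma ((j : ℝ) + a + 1))

/-- `A_λ(w,z) = 2^{λ-1} Γ(λ+1) Σ_{k≥0} (u + (-1)^k) z^{-λ} J_{k+λ}(z) C_k^λ(w)`,
where `u` stands for `i^m`. -/
def AfunU (u : ℂ) (lam w z : ℝ) : ℂ :=
  (((2:ℝ)^(lam - 1) * Real.Gamma (lam + 1) : ℝ) : ℂ) *
    ∑' k : ℕ, (u + (-1 : ℂ)^k) * ((z ^ (-lam) * besselJ ((k : ℝ) + lam) z * geg lam k w : ℝ) : ℂ)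

/-- `B_λ(w,z) = -2^{λ-1} Γ(λ) Σ_{k≥0} (k+λ)(u - (-1)^k) z^{-λ} J_{k+λ}(z) C_k^λ(w)`. -/
def BfunU (u : ℂ) (lam w z : ℝ) : ℂ :=
  -(((2:ℝ)^(lam - 1) * Real.Gamma lam : ℝ) : ℂ) *
    ∑' k : ℕ, ((k : ℂ) + (lam : ℂ)) * (u - (-1 : ℂ)^k) *
      ((z ^ (-lam) * besselJ ((k : ℝ) + lam) z * geg lam k w : ℝ) : ℂ)

/-- `C_λ(w,z) = -2^{λ-1} Γ(λ) Σ_{k≥0} (u + (-1)^k) z^{-λ-1} J_{k+λ}(z) (C_k^λ)'(w)`. -/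
def CfunU (u : ℂ) (lam w z : ℝ) : ℂ :=
  -(((2:ℝ)^(lam - 1) * Real.Gamma lam : ℝ) : ℂ) *
    ∑' k : ℕ, (u + (-1 : ℂ)^k) *
      ((z ^ (-lam - 1) * besselJ ((k : ℝ) + lam) z * deriv (geg lam k) w : ℝ) : ℂ)

/-- `A_{1/2}(w,z) = (π/(2z))^{1/2} (1/2) Σ_{k≥0} (-i + (-1)^k) J_{k+1/2}(z) C_k^{1/2}(w)`. -/
def A12 (w z : ℝ) : ℂ :=
  ((Real.sqrt (Real.pi/(2*z)) : ℝ) : ℂ) * (1/2 : ℂ) *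
    ∑' k : ℕ, (-Complex.I + (-1 : ℂ)^k) * ((besselJ ((k:ℝ) + 1/2) z * geg (1/2) k w : ℝ) : ℂ)

/-- `B_{1/2}(w,z) = (π/(2z))^{1/2} Σ_{k≥0} (k+1/2)(i + (-1)^k) J_{k+1/2}(z) C_k^{1/2}(w)`. -/
def B12 (w z : ℝ) : ℂ :=
  ((Real.sqrt (Real.pi/(2*z)) : ℝ) : ℂ) *
    ∑' k : ℕ, ((k : ℂ) + 1/2) * (Complex.I + (-1 : ℂ)^k) *
      ((besselJ ((k:ℝ) + 1/2) z * geg (1/2) k w : ℝ) : ℂ)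

lemma geg_zero (l w : ℝ) : geg l 0 w = 1 := by rw [geg]
lemma geg_one (l w : ℝ) : geg l 1 w = 2 * l * w := by rw [geg]
lemma geg_rec (l : ℝ) (k : ℕ) (w : ℝ) : ((k:ℝ)+2) * geg l (k+2) w =
    2 * ((k : ℝ) + 1 + l) * w * geg l (k+1) w - ((k : ℝ) + 2 * l) * geg l k w := by
  rw [geg]
  have : (k:ℝ)+2 ≠ 0 := by positivity
  field_simp

lemma geg_contig (l : ℝ) (hl : 0 < l) (w : ℝ) (k : ℕ) :
    l * (geg (l+1) (k+2) w - geg (l+1) k w) = ((k:ℝ)+2+l) * geg l (k+2) w := by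
  induction k using Nat.twoStepInduction with
  | zero =>
    have h1 := geg_rec l 0 w
    have h2 := geg_rec (l+1) 0 w
    simp only [geg_zero, geg_one, zero_add, Nat.cast_zero] at *
    linear_combination (l/2) * h2 - (2+l)/2 * h1
  | one =>
    have h1 := geg_rec l 0 w
    have h2 := geg_rec (l+1) 0 w
    have h3 := geg_rec l 1 w
    have h4 := geg_rec (l+1) 1 w
    simp only [geg_zero, geg_one, zero_add, Nat.cast_zero, Nat.cast_one, Nat.reduceAdd] at *
    linear_combination (l/3) * h4 - (3+l)/3 * h3 + (l/3*(2*(1+1+(l+1))*w))/2 * h2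
       - ((3+l)/3 * (2*(1+1+l)*w))/2 * h1
  | more j i0 i1 =>
    have h1 := geg_rec l (j+2) w
    have h2 := geg_rec (l+1) (j+2) w
    have h3 := geg_rec (l+1) j w
    push_cast at *
    have e1 : j + 1 + 2 = j + 2 + 1 := rfl
    rw [e1] at i1
    have hp : ((j:ℝ)+2+l) * ((j:ℝ)+4) ≠ 0 := by positivity
    apply mul_left_cancel₀ hp
    linear_combination ((j:ℝ)+2+l)*l*h2 - ((j:ℝ)+2+l)*(j+2+2+l)*h1
      + ((j:ℝ)+2+l)*2*w*(j+4+l)*i1 - (j+2+2*l)*(j+4+l)*i0 - l*(j+4+l)*h3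

lemma geg_hasDeriv (l : ℝ) (hl : 0 < l) (w : ℝ) (k : ℕ) :
    HasDerivAt (geg l (k+1)) (2 * l * geg (l+1) k w) w := by
  induction k using Nat.twoStepInduction with
  | zero =>
    have : geg l (0+1) = fun w => 2 * l * w := by funext w; exact geg_one l w
    rw [this, geg_zero]
    simpa using (hasDerivAt_id w).const_mul (2*l)
  | one =>
    have : geg l (1+1) = fun w => (2 * (1+l) * w * (2*l*w) - 2*l)/2 := by
      funext w
      have := geg_rec l 0 w
      simp only [geg_zero, geg_one, zero_add, Nat.cast_zero, Nat.reduceAdd] at *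
      linarith
    rw [this, geg_one]
    have h := ((((hasDerivAt_id w).const_mul (2*(1+l))).mul
      ((hasDerivAt_id w).const_mul (2*l))).sub_const (2*l)).div_const 2
    refine h.congr_deriv ?_
    simp; ring
  | more j i0 i1 =>
    have : geg l (j+2+1) = fun w => (2 * (((j+1:ℕ) : ℝ) + 1 + l) * w * geg l (j+1+1) w
      - (((j+1:ℕ) : ℝ) + 2 * l) * geg l (j+1) w) / (((j+1:ℕ) : ℝ) + 2) := by
      funext w
      rw [show j+2+1 = (j+1)+2 by rfl, geg]
    rw [this]
    have h := ((((hasDerivAt_id w).const_mul (2 * (((j+1:ℕ) : ℝ) + 1 + l))).mul i1).sub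
      (i0.const_mul (((j+1:ℕ) : ℝ) + 2 * l))).div_const (((j+1:ℕ) : ℝ) + 2)
    refine h.congr_deriv ?_
    have h1 := geg_rec (l+1) j w
    have h2 := geg_contig l hl w j
    have hp : (((j+1:ℕ) : ℝ) + 2) ≠ 0 := by positivity
    rw [div_eq_iff hp]
    simp only [id]
    push_cast
    linear_combination -2*l*h1 - 2*h2

lemma geg_bound (l : ℝ) (hl : 0 < l) (w : ℝ) (hw : |w| ≤ 1) (k : ℕ) :
    |geg l k w| ≤ (3*(1+l))^k := by
  have hM : (1:ℝ) ≤ 3*(1+l) := by linarith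
  induction k using Nat.twoStepInduction with
  | zero => simp [geg_zero]
  | one =>
    rw [geg_one, abs_mul, abs_of_pos (by positivity : 0 < 2*l)]
    nlinarith
  | more j i0 i1 =>
    rw [geg, abs_div, abs_of_pos (by positivity : 0 < (j:ℝ)+2), div_le_iff₀ (by positivity)]
    set M := 3*(1+l) with hMd
    have hMj : 0 < M^j := by positivity
    have a1 : |2 * ((j : ℝ) + 1 + l) * w * geg l (j+1) w| ≤ 2 * ((j:ℝ)+1+l) * M^(j+1) := by
      rw [abs_mul, abs_mul, abs_of_pos (by positivity : 0 < 2 * ((j : ℝ) + 1 + l))]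
      have : |w| * |geg l (j+1) w| ≤ 1 * M^(j+1) := by gcongr
      rw [mul_assoc]; rw [one_mul] at this
      gcongr
    have a2 : |((j : ℝ) + 2 * l) * geg l j w| ≤ ((j:ℝ)+2*l) * M^(j+1) := by
      rw [abs_mul, abs_of_pos (by positivity : 0 < ((j : ℝ) + 2 * l))]
      gcongr
      exact i0.trans (pow_le_pow_right₀ hM (Nat.le_succ j))
    refine (abs_sub _ _).trans ((add_le_add a1 a2).trans ?_)
    rw [← add_mul, pow_succ M (j+1), mul_assoc, mul_comm]
    gcongr
    have : (0:ℝ) ≤ j := by positivity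
    nlinarith

/-- Factorial decay. -/
def Dec (c : ℕ → ℂ) : Prop := ∃ K r : ℝ, 0 ≤ K ∧ 0 ≤ r ∧ ∀ k, ‖c k‖ ≤ K * (r^k / k.factorial)

lemma Dec.shift {c : ℕ → ℂ} (h : Dec c) : Dec (fun k => c (k+1)) := by
  obtain ⟨K, r, hK, hr, h⟩ := h
  refine ⟨K*r, r, by positivity, hr, fun k => (h (k+1)).trans ?_⟩
  rw [mul_assoc]
  gcongr
  rw [pow_succ, mul_div_assoc', mul_comm]
  gcongr
  exact Nat.le_succ k

lemma Dec.shiftn {c : ℕ → ℂ} (h : Dec c) (n : ℕ) : Dec (fun k => c (k+n)) := by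
  induction n with
  | zero => exact h
  | succ n ih =>
    have := ih.shift
    convert this using 3
    ring

lemma Dec.summ {c : ℕ → ℂ} (h : Dec c) (R : ℝ) (hR : 0 ≤ R) : Summable (fun k => ‖c k‖ * R^k) := by
  obtain ⟨K, r, hK, hr, h⟩ := h
  refine Summable.of_nonneg_of_le (fun k => by positivity) (fun k => ?_)
    ((Real.summable_pow_div_factorial (r*R)).mul_left K)
  calc ‖c k‖ * R^k ≤ K * (r^k / k.factorial) * R^k := by gcongr; exact h k
    _ = _ := by rw [mul_pow]; ring

def F (l : ℝ) (c : ℕ → ℂ) (w : ℝ) : ℂ := ∑' k, c k * ((geg l k w : ℝ) : ℂ)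

lemma deriv_geg_zero (l w : ℝ) : HasDerivAt (geg l 0) 0 w := by
  have : geg l 0 = fun _ => 1 := by funext w; exact geg_zero l w
  rw [this]; exact hasDerivAt_const _ _

lemma geg_diff (l : ℝ) (hl : 0 < l) (k : ℕ) (w : ℝ) : DifferentiableAt ℝ (geg l k) w := by
  cases k with
  | zero => exact (deriv_geg_zero l w).differentiableAt
  | succ k => exact (geg_hasDeriv l hl w k).differentiableAt

lemma deriv_geg_bound (l : ℝ) (hl : 0 < l) (w : ℝ) (hw : |w| ≤ 1) (k : ℕ) :
    |deriv (geg l k) w| ≤ 2*l*(3*(2+l))^k := by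
  cases k with
  | zero => rw [(deriv_geg_zero l w).deriv]; simp; positivity
  | succ k =>
    rw [(geg_hasDeriv l hl w k).deriv, abs_mul, abs_of_pos (by positivity : 0 < 2*l)]
    gcongr
    refine (geg_bound (l+1) (by linarith) w hw k).trans ?_
    rw [show 1 + (l+1) = 2 + l by ring]
    exact pow_le_pow_right₀ (by linarith) (Nat.le_succ k)

lemma abs_le_of_Ioo {w : ℝ} (hw : w ∈ Set.Ioo (-1:ℝ) 1) : |w| ≤ 1 := by
  rw [abs_le]; exact ⟨hw.1.le, hw.2.le⟩

lemma F_hasDeriv (l : ℝ) (hl : 0 < l) (c : ℕ → ℂ) (hc : Dec c) (w : ℝ)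
    (hw : w ∈ Set.Ioo (-1:ℝ) 1) :
    HasDerivAt (F l c) (∑' k, c k * ((deriv (geg l k) w : ℝ) : ℂ)) w := by
  have hu := (hc.summ (3*(2+l)) (by positivity)).mul_left (2*l)
  have := hasDerivAt_tsum_of_isPreconnected (𝕜 := ℝ) (F := ℂ)
    (g := fun k y => c k * ((geg l k y : ℝ) : ℂ))
    (g' := fun k y => c k * ((deriv (geg l k) y : ℝ) : ℂ)) (t := Set.Ioo (-1:ℝ) 1) (y₀ := w) (y := w)
    hu isOpen_Ioo isPreconnected_Ioo ?_ ?_ hw ?_ hw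
  · exact this
  · intro k y hy
    exact ((geg_diff l hl k y).hasDerivAt.ofReal_comp).const_mul (c k)
  · intro k y hy
    rw [norm_mul, Complex.norm_real, Real.norm_eq_abs]
    have := deriv_geg_bound l hl y (abs_le_of_Ioo hy) k
    calc _ ≤ ‖c k‖ * (2*l*(3*(2+l))^k) := by gcongr
      _ = _ := by ring
  · refine Summable.of_norm_bounded (hc.summ (3*(1+l)) (by positivity)) (fun k => ?_)
    rw [norm_mul, Complex.norm_real, Real.norm_eq_abs]
    gcongr
    exact geg_bound l hl w (abs_le_of_Ioo hw) k

lemma F_deriv_eq (l : ℝ) (hl : 0 < l) (c : ℕ → ℂ) (hc : Dec c) (w : ℝ)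
    (hw : w ∈ Set.Ioo (-1:ℝ) 1) :
    ∑' k, c k * ((deriv (geg l k) w : ℝ) : ℂ) = 2 * l * F (l+1) (fun k => c (k+1)) w := by
  rw [Summable.tsum_eq_zero_add, (deriv_geg_zero l w).deriv]
  · simp only [(geg_hasDeriv l hl w _).deriv, F]
    rw [← tsum_mul_left]
    simp
    congr 1; funext k; ring
  · refine Summable.of_norm_bounded ((hc.summ (3*(2+l)) (by positivity)).mul_left (2*l))
      (fun k => ?_)
    rw [norm_mul, Complex.norm_real, Real.norm_eq_abs]
    have := deriv_geg_bound l hl w (abs_le_of_Ioo hw) k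
    calc _ ≤ ‖c k‖ * (2*l*(3*(2+l))^k) := by gcongr
      _ = _ := by ring

def Pc (n : ℕ) : ℝ := 2^n * Real.Gamma (n + 1/2) / Real.sqrt Real.pi

lemma Pc_zero : Pc 0 = 1 := by
  unfold Pc
  have : Real.sqrt Real.pi ≠ 0 := by positivity
  rw [Nat.cast_zero, zero_add, Real.Gamma_one_half_eq]; field_simp

lemma Pc_succ (n : ℕ) : Pc (n+1) = Pc n * (2 * (n+1/2)) := by
  unfold Pc
  have := Real.Gamma_add_one (s := (n:ℝ)+1/2) (by positivity)
  rw [show (((n+1:ℕ):ℝ) + 1/2) = (n:ℝ) + 1/2 + 1 by push_cast; ring, this]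
  ring

lemma F_iter (c : ℕ → ℂ) (hc : Dec c) (s : ℂ) (n : ℕ) : ∀ w ∈ Set.Ioo (-1:ℝ) 1,
    deriv^[n] (fun w' => s * F (1/2) c w') w
      = s * Pc n * F (n + 1/2) (fun k => c (k+n)) w := by
  induction n with
  | zero => intro w hw; simp [Pc_zero]
  | succ n ih =>
    intro w hw
    rw [Function.iterate_succ_apply']
    have : deriv^[n] (fun w' => s * F (1/2) c w') =ᶠ[nhds w]
        fun w => s * Pc n * F (n + 1/2) (fun k => c (k+n)) w := by
      filter_upwards [isOpen_Ioo.mem_nhds hw] with y hy using ih y hy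
    have hp : 0 < (n:ℝ)+1/2 := by positivity
    rw [this.deriv_eq, ((F_hasDeriv _ hp _ (hc.shiftn n) w hw).const_mul _).deriv,
      F_deriv_eq _ hp _ (hc.shiftn n) w hw, Pc_succ]
    rw [show (((n+1:ℕ):ℝ) + 1/2) = (n:ℝ) + 1/2 + 1 by push_cast; ring]
    simp only [show ∀ k, k + 1 + n = k + (n+1) by intro k; ring]
    push_cast
    ring

lemma F_iter_succ (c : ℕ → ℂ) (hc : Dec c) (s : ℂ) (n : ℕ) (w : ℝ) (hw : w ∈ Set.Ioo (-1:ℝ) 1) :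
    deriv^[n+1] (fun w' => s * F (1/2) c w') w
      = s * Pc n * ∑' k, c (k+n) * ((deriv (geg (n+1/2) k) w : ℝ) : ℂ) := by
  rw [Function.iterate_succ_apply']
  have : deriv^[n] (fun w' => s * F (1/2) c w') =ᶠ[nhds w]
      fun w => s * Pc n * F (n + 1/2) (fun k => c (k+n)) w := by
    filter_upwards [isOpen_Ioo.mem_nhds hw] with y hy using F_iter c hc s n y hy
  have hp : 0 < (n:ℝ)+1/2 := by positivity
  rw [this.deriv_eq, ((F_hasDeriv _ hp _ (hc.shiftn n) w hw).const_mul _).deriv]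

lemma gamma_mono (a : ℝ) (ha : 0 < a) (j : ℕ) : Real.Gamma (a+1) ≤ Real.Gamma (j + a + 1) := by
  induction j with
  | zero => simp
  | succ j ih =>
    have h := Real.Gamma_add_one (s := (j:ℝ)+a+1) (by positivity)
    rw [show (((j+1:ℕ):ℝ) + a + 1) = (j:ℝ) + a + 1 + 1 by push_cast; ring, h]
    have : 0 < Real.Gamma (j+a+1) := Real.Gamma_pos_of_pos (by positivity)
    have : (0:ℝ) ≤ j := by positivity
    nlinarith

lemma gamma_fact (k : ℕ) : (k.factorial : ℝ) * Real.Gamma (3/2) ≤ Real.Gamma (k + 1/2 + 1) := by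
  induction k with
  | zero => norm_num
  | succ k ih =>
    have h := Real.Gamma_add_one (s := (k:ℝ)+1/2+1) (by positivity)
    rw [show (((k+1:ℕ):ℝ) + 1/2 + 1) = (k:ℝ) + 1/2 + 1 + 1 by push_cast; ring, h,
      Nat.factorial_succ]
    push_cast
    rw [mul_assoc]
    have : 0 < Real.Gamma (3/2) := Real.Gamma_pos_of_pos (by positivity)
    gcongr ?_ * ?_
    linarith

lemma bessel_bound (a z : ℝ) (ha : 0 < a) (hz : 0 < z) :
    |besselJ a z| ≤ (z/2)^a / Real.Gamma (a+1) * Real.exp ((z/2)^2) := by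
  have hG : 0 < Real.Gamma (a+1) := Real.Gamma_pos_of_pos (by positivity)
  have hs : HasSum (fun j : ℕ => (z/2)^a / Real.Gamma (a+1) * (((z/2)^2)^j / j.factorial))
      ((z/2)^a / Real.Gamma (a+1) * Real.exp ((z/2)^2)) := by
    apply HasSum.mul_left
    rw [Real.exp_eq_exp_ℝ]
    exact NormedSpace.expSeries_div_hasSum_exp _
  rw [← Real.norm_eq_abs]
  refine tsum_of_norm_bounded hs (fun j => ?_)
  have hG2 : 0 < Real.Gamma (j+a+1) := Real.Gamma_pos_of_pos (by positivity)
  rw [Real.norm_eq_abs, abs_div, abs_mul, abs_pow, abs_neg, abs_one, one_pow, one_mul,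
    abs_of_pos (by positivity : 0 < (j.factorial:ℝ) * Real.Gamma (j+a+1)),
    abs_of_pos (by positivity : 0 < (z/2) ^ (2*(j:ℝ)+a)), Real.rpow_add (by positivity),
    show (2*(j:ℝ)) = ((2*j:ℕ):ℝ) by push_cast; ring, Real.rpow_natCast, pow_mul,
    div_mul_div_comm, mul_comm (((z/2)^2)^j), mul_comm (j.factorial : ℝ)]
  gcongr
  exact gamma_mono a ha j

lemma dec_of (z : ℝ) (hz : 0 < z) (c : ℕ → ℂ)
    (h : ∀ k : ℕ, ‖c k‖ ≤ 2 * ((k:ℝ)+1) * |besselJ ((k:ℝ)+1/2) z|) : Dec c := by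
  have hG : 0 < Real.Gamma (3/2) := Real.Gamma_pos_of_pos (by positivity)
  refine ⟨2 * ((z/2)^(1/2:ℝ) / Real.Gamma (3/2) * Real.exp ((z/2)^2)), 2*(z/2), by positivity,
    by positivity, fun k => (h k).trans ?_⟩
  have h1 := bessel_bound ((k:ℝ)+1/2) z (by positivity) hz
  have h2 : (k:ℝ)+1 ≤ 2^k := by
    exact_mod_cast Nat.lt_two_pow_self (n := k)
  calc 2 * ((k:ℝ)+1) * |besselJ ((k:ℝ)+1/2) z|
      ≤ 2 * 2^k * ((z/2)^((k:ℝ)+1/2) / (k.factorial * Real.Gamma (3/2)) * Real.exp ((z/2)^2)) := by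
        gcongr
        refine h1.trans ?_
        gcongr
        exact gamma_fact k
    _ = _ := by
        rw [Real.rpow_add (by positivity), Real.rpow_natCast, mul_pow]
        field_simp

def cA (z : ℝ) (k : ℕ) : ℂ := (-Complex.I + (-1 : ℂ)^k) * (besselJ ((k:ℝ) + 1/2) z : ℝ)
def cB (z : ℝ) (k : ℕ) : ℂ :=
  ((k : ℂ) + 1/2) * (Complex.I + (-1 : ℂ)^k) * (besselJ ((k:ℝ) + 1/2) z : ℝ)

lemma dec_cA (z : ℝ) (hz : 0 < z) : Dec (cA z) := by
  refine dec_of z hz _ (fun k => ?_)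
  rw [cA, norm_mul, Complex.norm_real, Real.norm_eq_abs]
  gcongr
  refine (norm_add_le _ _).trans ?_
  simp
  have : (0:ℝ) ≤ k := by positivity
  linarith

lemma dec_cB (z : ℝ) (hz : 0 < z) : Dec (cB z) := by
  refine dec_of z hz _ (fun k => ?_)
  rw [cB, norm_mul, norm_mul, Complex.norm_real, Real.norm_eq_abs, mul_comm 2]
  have h1 : ‖(k:ℂ) + 1/2‖ ≤ (k:ℝ) + 1 := by
    refine (norm_add_le _ _).trans ?_
    simp; norm_num
  have h2 : ‖Complex.I + (-1:ℂ)^k‖ ≤ 2 := by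
    refine (norm_add_le _ _).trans ?_
    simp; norm_num
  gcongr

lemma A12_eq (z : ℝ) : (fun w' => A12 w' z)
    = fun w' => (((Real.sqrt (Real.pi/(2*z)) : ℝ) : ℂ) * (1/2 : ℂ)) * F (1/2) (cA z) w' := by
  funext w
  simp only [A12, F, cA]
  congr 2; funext k; push_cast; ring

lemma B12_eq (z : ℝ) : (fun w' => B12 w' z)
    = fun w' => ((Real.sqrt (Real.pi/(2*z)) : ℝ) : ℂ) * F (1/2) (cB z) w' := by
  funext w
  simp only [B12, F, cB]
  congr 2; funext k; push_cast; ring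

lemma I_pow_odd (n : ℕ) : Complex.I ^ (2*n+3) = (-1)^n * (-Complex.I) := by
  rw [pow_add, pow_mul, Complex.I_sq, Complex.I_pow_three]

lemma negone_sq (n : ℕ) : (-1:ℂ)^n * (-1)^n = 1 := by rw [← mul_pow]; simp

lemma const_id (z : ℝ) (hz : 0 < z) (n : ℕ) :
    (2:ℝ)^((n:ℝ)+1/2-1) * Real.Gamma (n+1/2) * z^(-((n:ℝ)+1/2))
      = z^(-(n:ℝ)) * (Real.sqrt (Real.pi/(2*z)) * Pc n) := by
  have h2 : (2:ℝ)^((n:ℝ)+1/2-1) = 2^n / Real.sqrt 2 := by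
    rw [show (n:ℝ)+1/2-1 = n - 1/2 by ring, Real.rpow_sub (by norm_num), Real.rpow_natCast,
      Real.sqrt_eq_rpow]
  have h3 : z^(-((n:ℝ)+1/2)) = z^(-(n:ℝ)) / Real.sqrt z := by
    rw [show -((n:ℝ)+1/2) = -n - 1/2 by ring, Real.rpow_sub hz, Real.sqrt_eq_rpow]
  rw [h2, h3, Pc, Real.sqrt_div Real.pi_pos.le, Real.sqrt_mul (by norm_num)]
  have : Real.sqrt Real.pi ≠ 0 := by positivity
  field_simp

/-- For odd `m ≥ 3` and `λ = (m-2)/2`, the functions `A_λ, B_λ, C_λ` of the series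
representation of the Clifford-Fourier kernel are obtained from `A_{1/2}` and `B_{1/2}`
by differentiation in `w`:
`A_{(m-2)/2} = (-1)^{(m-3)/2} (m-2) z^{(3-m)/2} ∂_w^{(m-3)/2} A_{1/2}`,
`B_{(m-2)/2} = (-1)^{(m-3)/2} z^{(3-m)/2} ∂_w^{(m-3)/2} B_{1/2}`,
`C_{(m-2)/2} = 2 (-1)^{(m-1)/2} z^{(1-m)/2} ∂_w^{(m-1)/2} A_{1/2}`. -/
theorem kernel_odd_dimension (m : ℕ) (hodd : Odd m) (hm : 3 ≤ m)
    (z : ℝ) (hz : 0 < z) (w : ℝ) (hw : w ∈ Set.Ioo (-1 : ℝ) 1) :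
    AfunU (Complex.I ^ m) (((m:ℝ) - 2)/2) w z
      = (-1 : ℂ)^((m - 3)/2) * ((m : ℂ) - 2) * ((z ^ (((3:ℝ) - m)/2) : ℝ) : ℂ) *
          (deriv^[(m - 3)/2] (fun w' => A12 w' z) w) ∧
    BfunU (Complex.I ^ m) (((m:ℝ) - 2)/2) w z
      = (-1 : ℂ)^((m - 3)/2) * ((z ^ (((3:ℝ) - m)/2) : ℝ) : ℂ) *
          (deriv^[(m - 3)/2] (fun w' => B12 w' z) w) ∧
    CfunU (Complex.I ^ m) (((m:ℝ) - 2)/2) w z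
      = 2 * (-1 : ℂ)^((m - 1)/2) * ((z ^ (((1:ℝ) - m)/2) : ℝ) : ℂ) *
          (deriv^[(m - 1)/2] (fun w' => A12 w' z) w) := by
  obtain ⟨n, rfl⟩ : ∃ n, m = 2*n+3 := by
    obtain ⟨r, rfl⟩ := hodd
    exact ⟨r-1, by omega⟩
  have e1 : (2*n+3-3)/2 = n := by omega
  have e2 : (2*n+3-1)/2 = n+1 := by omega
  have e3 : (((2*n+3:ℕ):ℝ) - 2)/2 = n + 1/2 := by push_cast; ring
  have e4 : ((3:ℝ) - ((2*n+3:ℕ):ℝ))/2 = -(n:ℝ) := by push_cast; ring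
  have e5 : ((1:ℝ) - ((2*n+3:ℕ):ℝ))/2 = -(n:ℝ) - 1 := by push_cast; ring
  rw [e1, e2, e3, e4, e5, A12_eq, B12_eq, F_iter _ (dec_cA z hz) _ n w hw,
    F_iter _ (dec_cB z hz) _ n w hw, F_iter_succ _ (dec_cA z hz) _ n w hw, I_pow_odd]
  have hs := negone_sq n
  have hK := congrArg (fun x : ℝ => (x:ℂ)) (const_id z hz n)
  simp only [Complex.ofReal_mul] at hK
  have harg : ∀ k : ℕ, ((k+n:ℕ):ℝ) + 1/2 = (k:ℝ) + (n+1/2) := by intro k; push_cast; ring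
  refine ⟨?_, ?_, ?_⟩
  · have hS : ∑' k : ℕ, ((-1)^n * (-Complex.I) + (-1 : ℂ)^k) *
        ((z ^ (-((n:ℝ)+1/2)) * besselJ ((k : ℝ) + (n+1/2)) z * geg (n+1/2) k w : ℝ) : ℂ)
        = ((z ^ (-((n:ℝ)+1/2)) : ℝ) : ℂ) * (-1)^n * F (n+1/2) (fun k => cA z (k+n)) w := by
      rw [F, ← tsum_mul_left]
      congr 1; funext k
      simp only [cA, harg]
      push_cast
      rw [pow_add]
      linear_combination (-(-1:ℂ)^k * ((z ^ (-((n:ℝ)+1/2)) : ℝ) : ℂ) *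
        (besselJ ((k : ℝ) + (n+1/2)) z : ℝ) * (geg (n+1/2) k w : ℝ)) * hs
    rw [AfunU, hS, Real.Gamma_add_one (by positivity)]
    push_cast
    push_cast at hK
    linear_combination ((n:ℂ) + 1/2) * (-1)^n * F (n+1/2) (fun k => cA z (k+n)) w * hK
  · have hS : ∑' k : ℕ, ((k:ℂ) + (((n:ℝ)+1/2 : ℝ) : ℂ)) * ((-1)^n * (-Complex.I) - (-1 : ℂ)^k) *
        ((z ^ (-((n:ℝ)+1/2)) * besselJ ((k : ℝ) + (n+1/2)) z * geg (n+1/2) k w : ℝ) : ℂ)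
        = -(((z ^ (-((n:ℝ)+1/2)) : ℝ) : ℂ) * (-1)^n) * F (n+1/2) (fun k => cB z (k+n)) w := by
      rw [F, ← tsum_mul_left]
      congr 1; funext k
      simp only [cB, harg]
      push_cast
      rw [pow_add]
      linear_combination ((-1:ℂ)^k * ((k:ℂ) + (n+1/2)) * ((z ^ (-((n:ℝ)+1/2)) : ℝ) : ℂ) *
        (besselJ ((k : ℝ) + (n+1/2)) z : ℝ) * (geg (n+1/2) k w : ℝ)) * hs
    rw [BfunU, hS]
    push_cast
    push_cast at hK
    linear_combination (-1)^n * F (n+1/2) (fun k => cB z (k+n)) w * hK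
  · have hz1 : ∀ x : ℝ, z^(x-1) = z^x / z := fun x => by rw [Real.rpow_sub hz, Real.rpow_one]
    have hS : ∑' k : ℕ, ((-1)^n * (-Complex.I) + (-1 : ℂ)^k) *
        ((z ^ (-((n:ℝ)+1/2) - 1) * besselJ ((k : ℝ) + (n+1/2)) z *
          deriv (geg (n+1/2) k) w : ℝ) : ℂ)
        = ((z ^ (-((n:ℝ)+1/2)-1) : ℝ) : ℂ) * (-1)^n *
          ∑' k, cA z (k+n) * ((deriv (geg (n+1/2) k) w : ℝ) : ℂ) := by
      rw [← tsum_mul_left]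
      congr 1; funext k
      simp only [cA, harg]
      push_cast
      rw [pow_add]
      linear_combination (-(-1:ℂ)^k * ((z ^ (-((n:ℝ)+1/2) - 1) : ℝ) : ℂ) *
        (besselJ ((k : ℝ) + (n+1/2)) z : ℝ) * (deriv (geg (n+1/2) k) w : ℝ)) * hs
    rw [CfunU, hS, hz1, hz1]
    push_cast
    push_cast at hK
    linear_combination (-(-1)^n / (z:ℂ) *
      ∑' k, cA z (k+n) * ((deriv (geg (n+1/2) k) w : ℝ) : ℂ)) * hK

end CliffordFourier
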